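/- Let G be a reachability game and let F ⊆ S × S be a sufficient subgoal for G, i.e., REACH wins from every state in Post(F) in G. If REACH wins from a state s in the pre-game G_pre = ⟨Init, Safe ∖ F, Reach ∖ F, Pre(Enf(F, G))⟩, then REACH wins from s in G. -/

import Mathlib

universe u

/-- A reachability game over a state type `S`. States with `isReach s` are
controlled by player REACH, the others by player SAFE. -/
structure Game (S : Type u) where
  isReach : S → Prop
  Safe : S → S → Prop
  Reach : S → S → Prop
  Init : Set S
  Goal : Set S
  safe_src : ∀ s s', Safe s s' → ¬ isReach s
  reach_src : ∀ s s', Reach s s' → isReach s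

namespace Game

variable {S : Type u}

/-- The edge relation `E = Safe ∪ Reach`. -/
def E (G : Game S) (s s' : S) : Prop := G.Safe s s' ∨ G.Reach s s'

/-- A trap state has no outgoing `E`-transition. -/
def Trap (G : Game S) (s : S) : Prop := ∀ s', ¬ G.E s s'

/-- A play: an `E`-path which is infinite (`len = ⊤`) or finite
(`len = n`) and then ends in a trap state. Values of `seq` beyond a finite
length are irrelevant. -/
structure Play (G : Game S) where
  seq : ℕ → S
  len : ℕ∞
  step : ∀ i : ℕ, (i : ℕ∞) < len → G.E (seq i) (seq (i + 1))
  fin_trap : ∀ n : ℕ, len = (n : ℕ∞) → G.Trap (seq n)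

/-- REACH wins a play if some state of the play is a goal state. -/
def ReachWinsPlay (G : Game S) (p : G.Play) : Prop :=
  ∃ k : ℕ, (k : ℕ∞) ≤ p.len ∧ p.seq k ∈ G.Goal

/-- SAFE wins a play iff REACH does not. -/
def SafeWinsPlay (G : Game S) (p : G.Play) : Prop := ¬ G.ReachWinsPlay p

/-- The list `[f 0, …, f (n-1)]`. -/
def listPrefix (f : ℕ → S) (n : ℕ) : List S := (List.range n).map f

/-- A reachability strategy: on any nonempty sequence ending in a non-trap
REACH state it chooses a `Reach`-successor. -/
def IsReachStrategy (G : Game S) (σ : List S → S) : Prop :=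
  ∀ (ω : List S) (s : S), G.isReach s → ¬ G.Trap s → G.Reach s (σ (ω ++ [s]))

/-- A safety strategy: on any nonempty sequence ending in a non-trap SAFE
state it chooses a `Safe`-successor. -/
def IsSafeStrategy (G : Game S) (σ : List S → S) : Prop :=
  ∀ (ω : List S) (s : S), ¬ G.isReach s → ¬ G.Trap s → G.Safe s (σ (ω ++ [s]))

/-- Consistency of a play with a reachability strategy. -/
def ConsistentR (G : Game S) (σ : List S → S) (p : G.Play) : Prop :=
  ∀ i : ℕ, (i : ℕ∞) < p.len → G.isReach (p.seq i) →
    p.seq (i + 1) = σ (listPrefix p.seq (i + 1))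

/-- Consistency of a play with a safety strategy. -/
def ConsistentS (G : Game S) (σ : List S → S) (p : G.Play) : Prop :=
  ∀ i : ℕ, (i : ℕ∞) < p.len → ¬ G.isReach (p.seq i) →
    p.seq (i + 1) = σ (listPrefix p.seq (i + 1))

/-- `σ` is a reachability strategy winning from `s`. -/
def WinningReachStrategyFrom (G : Game S) (σ : List S → S) (s : S) : Prop :=
  G.IsReachStrategy σ ∧
    ∀ p : G.Play, p.seq 0 = s → G.ConsistentR σ p → G.ReachWinsPlay p

/-- `σ` is a safety strategy winning from `s`. -/
def WinningSafeStrategyFrom (G : Game S) (σ : List S → S) (s : S) : Prop :=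
  G.IsSafeStrategy σ ∧
    ∀ p : G.Play, p.seq 0 = s → G.ConsistentS σ p → G.SafeWinsPlay p

/-- REACH wins from `s`. -/
def ReachWinsFrom (G : Game S) (s : S) : Prop :=
  ∃ σ : List S → S, G.WinningReachStrategyFrom σ s

/-- SAFE wins from `s`. -/
def SafeWinsFrom (G : Game S) (s : S) : Prop :=
  ∃ σ : List S → S, G.WinningSafeStrategyFrom σ s

/-- Sources of a transition predicate. -/
def Pre (T : S → S → Prop) : Set S := {s | ∃ s', T s s'}

/-- Targets of a transition predicate. -/
def Post (T : S → S → Prop) : Set S := {s' | ∃ s, T s s'}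

/-- Enforceable transitions of `T` in `G`. -/
def Enf (G : Game S) (T : S → S → Prop) (s s' : S) : Prop :=
  G.E s s' ∧ T s s' ∧ ∀ s'', G.Safe s s'' → T s s''

/-- `C` is a necessary subgoal: every play of `G` (from `Init`) reaching
`Goal` at index `n` crosses `C` at some index `k < n`. -/
def NecessarySubgoal (G : Game S) (C : S → S → Prop) : Prop :=
  ∀ p : G.Play, p.seq 0 ∈ G.Init →
    ∀ n : ℕ, (n : ℕ∞) ≤ p.len → p.seq n ∈ G.Goal →
      ∃ k < n, C (p.seq k) (p.seq (k + 1))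

/-- `ρ 0 … ρ n` is a play prefix: an `E`-path avoiding `Goal` whose last
state is not a trap state. -/
def IsPlayPrefix (G : Game S) (ρ : ℕ → S) (n : ℕ) : Prop :=
  (∀ i < n, G.E (ρ i) (ρ (i + 1))) ∧ (∀ j ≤ n, ρ j ∉ G.Goal) ∧ ¬ G.Trap (ρ n)

/-- Conformance of a play prefix with a symbolic reachability strategy. -/
def PrefixConformsR (G : Game S) (𝔖 : S → S → Prop) (ρ : ℕ → S) (n : ℕ) : Prop :=
  ∀ j < n, G.isReach (ρ j) → 𝔖 (ρ j) (ρ (j + 1))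

/-- Conformance of a play prefix with a symbolic safety strategy. -/
def PrefixConformsS (G : Game S) (𝔖 : S → S → Prop) (ρ : ℕ → S) (n : ℕ) : Prop :=
  ∀ j < n, ¬ G.isReach (ρ j) → 𝔖 (ρ j) (ρ (j + 1))

/-- A play conforms to a symbolic reachability strategy if all its play
prefixes do. -/
def PlayConformsR (G : Game S) (𝔖 : S → S → Prop) (p : G.Play) : Prop :=
  ∀ n : ℕ, (n : ℕ∞) ≤ p.len → G.IsPlayPrefix p.seq n → G.PrefixConformsR 𝔖 p.seq n

/-- A play conforms to a symbolic safety strategy if all its play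
prefixes do. -/
def PlayConformsS (G : Game S) (𝔖 : S → S → Prop) (p : G.Play) : Prop :=
  ∀ n : ℕ, (n : ℕ∞) ≤ p.len → G.IsPlayPrefix p.seq n → G.PrefixConformsS 𝔖 p.seq n

/-- `𝔖` is a winning symbolic reachability strategy from `s`. -/
def WinningSymbolicReachFrom (G : Game S) (𝔖 : S → S → Prop) (s : S) : Prop :=
  (∀ a b, 𝔖 a b → G.E a b) ∧
  (∀ p : G.Play, p.seq 0 = s → G.PlayConformsR 𝔖 p → G.ReachWinsPlay p) ∧
  (∀ (ρ : ℕ → S) (n : ℕ), ρ 0 = s → G.IsPlayPrefix ρ n → G.PrefixConformsR 𝔖 ρ n →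
      G.isReach (ρ n) → ∃ s', 𝔖 (ρ n) s' ∧ G.Reach (ρ n) s')

/-- `𝔖` is a winning symbolic safety strategy from `s`. -/
def WinningSymbolicSafeFrom (G : Game S) (𝔖 : S → S → Prop) (s : S) : Prop :=
  (∀ a b, 𝔖 a b → G.E a b) ∧
  (∀ p : G.Play, p.seq 0 = s → G.PlayConformsS 𝔖 p → G.SafeWinsPlay p) ∧
  (∀ (ρ : ℕ → S) (n : ℕ), ρ 0 = s → G.IsPlayPrefix ρ n → G.PrefixConformsS 𝔖 ρ n →
      ¬ G.isReach (ρ n) → ∃ s', 𝔖 (ρ n) s' ∧ G.Safe (ρ n) s')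

/-- Bisimulations on `G`. -/
def IsBisimulation (G : Game S) (R : S → S → Prop) : Prop :=
  ∀ s1 s2, R s1 s2 →
    ((s1 ∈ G.Goal ↔ s2 ∈ G.Goal) ∧ (s1 ∈ G.Init ↔ s2 ∈ G.Init) ∧
      (G.isReach s1 ↔ G.isReach s2)) ∧
    (∀ s1', G.E s1 s1' → ∃ s2', G.E s2 s2' ∧ R s1' s2') ∧
    (∀ s2', G.E s2 s2' → ∃ s1', G.E s1 s1' ∧ R s1' s2')

/-- The pre-game `⟨Init, Safe ∖ F, Reach ∖ F, Pre(Enf(F, G))⟩`. -/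
def preGame (G : Game S) (F : S → S → Prop) : Game S where
  isReach := G.isReach
  Safe := fun a b => G.Safe a b ∧ ¬ F a b
  Reach := fun a b => G.Reach a b ∧ ¬ F a b
  Init := G.Init
  Goal := Pre (G.Enf F)
  safe_src := fun a b h => G.safe_src a b h.1
  reach_src := fun a b h => G.reach_src a b h.1

/-- The post-game: transitions restricted to sources in `φ`. -/
def postGame (G : Game S) (φ : Set S) : Game S where
  isReach := G.isReach
  Safe := fun a b => G.Safe a b ∧ a ∈ φ
  Reach := fun a b => G.Reach a b ∧ a ∈ φ
  Init := G.Init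
  Goal := G.Goal
  safe_src := fun a b h => G.safe_src a b h.1
  reach_src := fun a b h => G.reach_src a b h.1

end Game

/-!
The set of states from which REACH wins is closed under enforceable predecessors: REACH makes one
move into the set and then follows a winning strategy chosen according to the state reached.
Conversely, it lies inside every set `X` that contains the goal and is closed under enforceable
predecessors: from a state outside `X` no REACH move enters `X`, and SAFE can avoid entering it.

Let `W` be the winning set of `G`. Since `W` contains `Post F` and is closed under enforceable
predecessors, it contains the goal `Pre(Enf(F, G))` of the pre-game. A SAFE move deleted from the
pre-game is an `F`-transition, so it also ends in `W`; hence `W` is closed under the enforceable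
predecessors of the pre-game as well, and therefore contains its winning set.
-/

namespace Game

variable {S : Type u} {G : Game S}

theorem E.reach {s t : S} (h : G.E s t) (hs : G.isReach s) : G.Reach s t :=
  h.resolve_left fun hSafe => G.safe_src s t hSafe hs

theorem E.safe {s t : S} (h : G.E s t) (hs : ¬ G.isReach s) : G.Safe s t :=
  h.resolve_right fun hReach => hs (G.reach_src s t hReach)

theorem exists_E_of_not_trap {s : S} (h : ¬ G.Trap s) : ∃ t, G.E s t :=
  not_forall_not.mp h

/-- The enforceable predecessors of `X`: the states from which REACH can force the next state
of the play to exist and lie in `X`. -/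
def enforceablePre (G : Game S) (X : Set S) : Set S := Pre (G.Enf fun _ t => t ∈ X)

theorem mem_enforceablePre_of_reach {X : Set S} {s t : S} (h : G.Reach s t) (ht : t ∈ X) :
    s ∈ G.enforceablePre X :=
  ⟨t, Or.inr h, ht, fun u hu => absurd (G.reach_src s t h) (G.safe_src s u hu)⟩

theorem mem_enforceablePre_of_safe {X : Set S} {s t : S} (h : G.Safe s t)
    (hX : ∀ u, G.Safe s u → u ∈ X) : s ∈ G.enforceablePre X :=
  ⟨t, Or.inl h, hX t h, hX⟩

/-- The winning region of REACH, as a set so that its closure properties are inclusions. -/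
def reachWinningRegion (G : Game S) : Set S := {s | G.ReachWinsFrom s}

section Strategies

theorem exists_strategy_preferring [Nonempty S] (R : S → S → Prop) (X : Set S) :
    ∃ σ : List S → S, ∀ ω s t, R s t →
      R s (σ (ω ++ [s])) ∧ (t ∈ X → σ (ω ++ [s]) ∈ X) := by
  have exists_move (s : S) : ∃ u, ∀ t, R s t → R s u ∧ (t ∈ X → u ∈ X) := by
    by_cases hX : ∃ t, R s t ∧ t ∈ X
    · obtain ⟨u, hu, huX⟩ := hX
      exact ⟨u, fun _ _ => ⟨hu, fun _ => huX⟩⟩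
    by_cases hR : ∃ t, R s t
    · obtain ⟨u, hu⟩ := hR
      exact ⟨u, fun t ht => ⟨hu, fun htX => absurd ⟨t, ht, htX⟩ hX⟩⟩
    · exact ⟨s, fun t ht => absurd ⟨t, ht⟩ hR⟩
  choose move hmove using exists_move
  refine ⟨fun ω => move (ω.getLastD (Classical.arbitrary S)), fun ω s => ?_⟩
  simpa only [List.getLastD_concat] using hmove s

theorem exists_isReachStrategy_preferring [Nonempty S] (G : Game S) (X : Set S) :
    ∃ σ, G.IsReachStrategy σ ∧ ∀ ω s t, G.Reach s t → t ∈ X → σ (ω ++ [s]) ∈ X := by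
  obtain ⟨σ, hσ⟩ := exists_strategy_preferring G.Reach X
  refine ⟨σ, fun ω s hs hTrap => ?_, fun ω s t h => (hσ ω s t h).2⟩
  obtain ⟨t, ht⟩ := exists_E_of_not_trap hTrap
  exact (hσ ω s t (ht.reach hs)).1

theorem exists_isSafeStrategy_preferring [Nonempty S] (G : Game S) (X : Set S) :
    ∃ τ, G.IsSafeStrategy τ ∧ ∀ ω s t, G.Safe s t → t ∈ X → τ (ω ++ [s]) ∈ X := by
  obtain ⟨τ, hτ⟩ := exists_strategy_preferring G.Safe X
  refine ⟨τ, fun ω s hs hTrap => ?_, fun ω s t h => (hτ ω s t h).2⟩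
  obtain ⟨t, ht⟩ := exists_E_of_not_trap hTrap
  exact (hτ ω s t (ht.safe hs)).1

/-- Make the first move by `σ`, then follow the strategy that `τ` assigns to the state reached,
forgetting the initial state. -/
def switchAfterFirst (σ : List S → S) (τ : S → List S → S) : List S → S
  | _ :: t :: ω => τ t (t :: ω)
  | ω => σ ω

theorem IsReachStrategy.switchAfterFirst {σ : List S → S} {τ : S → List S → S}
    (hσ : G.IsReachStrategy σ) (hτ : ∀ t, G.IsReachStrategy (τ t)) :
    G.IsReachStrategy (switchAfterFirst σ τ)
  | [], s => hσ [] s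
  | [_], s => hτ s [] s
  | _ :: t :: ω, s => hτ t (t :: ω) s

end Strategies

section Plays

theorem listPrefix_succ (f : ℕ → S) (n : ℕ) :
    listPrefix f (n + 1) = listPrefix f n ++ [f n] := by
  simp only [listPrefix, List.range_succ, List.map_append, List.map_singleton]

theorem listPrefix_succ_eq_cons (f : ℕ → S) (n : ℕ) :
    listPrefix f (n + 1) = f 0 :: listPrefix (fun i => f (i + 1)) n := by
  simp only [listPrefix, List.range_succ_eq_map, List.map_cons, List.map_map]
  rfl

theorem exists_seq_succ_eq_listPrefix (next : List S → S) (s : S) :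
    ∃ f : ℕ → S, f 0 = s ∧ ∀ n, f (n + 1) = next (listPrefix f (n + 1)) := by
  let history (n : ℕ) : List S := (fun ω => ω ++ [next ω])^[n] [s]
  let f : ℕ → S
    | 0 => s
    | n + 1 => next (history n)
  have history_eq (n : ℕ) : history n = listPrefix f (n + 1) := by
    induction n with
    | zero => rfl
    | succ n ih =>
      rw [listPrefix_succ, ← ih]
      exact Function.iterate_succ_apply' _ n [s]
  exact ⟨f, rfl, fun n => congrArg next (history_eq n)⟩

theorem exists_play_seq_eq {f : ℕ → S} (hf : ∀ n, ¬ G.Trap (f n) → G.E (f n) (f (n + 1))) :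
    ∃ p : G.Play, p.seq = f := by
  classical
  by_cases hTrap : ∃ n, G.Trap (f n)
  · refine ⟨⟨f, Nat.find hTrap, fun i hi => hf i (Nat.find_min hTrap (Nat.cast_lt.mp hi)),
      fun n hn => ?_⟩, rfl⟩
    exact Nat.cast_inj.mp hn ▸ Nat.find_spec hTrap
  · exact ⟨⟨f, ⊤, fun i _ => hf i fun hi => hTrap ⟨i, hi⟩,
      fun n hn => absurd hn (ENat.top_ne_natCast n)⟩, rfl⟩

theorem exists_play_consistent {σ τ : List S → S} (hσ : G.IsReachStrategy σ)
    (hτ : G.IsSafeStrategy τ) (s : S) :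
    ∃ p : G.Play, p.seq 0 = s ∧ G.ConsistentR σ p ∧ G.ConsistentS τ p := by
  classical
  obtain ⟨f, hf0, hf⟩ := exists_seq_succ_eq_listPrefix
    (fun ω => if G.isReach (ω.getLastD s) then σ ω else τ ω) s
  have f_succ (n : ℕ) : f (n + 1) =
      if G.isReach (f n) then σ (listPrefix f (n + 1)) else τ (listPrefix f (n + 1)) := by
    rw [hf, listPrefix_succ, List.getLastD_concat]
  have f_step (n : ℕ) (hTrap : ¬ G.Trap (f n)) : G.E (f n) (f (n + 1)) := by
    rw [f_succ, listPrefix_succ]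
    split_ifs with hs
    · exact Or.inr (hσ _ _ hs hTrap)
    · exact Or.inl (hτ _ _ hs hTrap)
  obtain ⟨p, rfl⟩ := exists_play_seq_eq f_step
  exact ⟨p, hf0, fun i _ hs => (f_succ i).trans (if_pos hs),
    fun i _ hs => (f_succ i).trans (if_neg hs)⟩

namespace Play

theorem len_pos_of_E (p : G.Play) {t : S} (h : G.E (p.seq 0) t) : 0 < p.len :=
  pos_iff_ne_zero.mpr fun hlen => p.fin_trap 0 hlen t h

theorem seq_mem_of_step (p : G.Play) {X : Set S} (h0 : p.seq 0 ∈ X)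
    (hstep : ∀ i : ℕ, (i : ℕ∞) < p.len → p.seq i ∈ X → p.seq (i + 1) ∈ X)
    (n : ℕ) (hn : (n : ℕ∞) ≤ p.len) : p.seq n ∈ X := by
  induction n with
  | zero => exact h0
  | succ n ih =>
    have hlt : (n : ℕ∞) < p.len := (Nat.cast_lt.mpr n.lt_succ_self).trans_le hn
    exact hstep n hlt (ih hlt.le)

/-- The play with its first state removed. -/
def tail (p : G.Play) (h : 0 < p.len) : G.Play where
  seq i := p.seq (i + 1)
  len := p.len - 1
  step i hi := p.step (i + 1) (lt_tsub_iff_right.mp hi)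
  fin_trap n hn := p.fin_trap (n + 1) <| by
    rw [Nat.cast_add_one, ← hn, tsub_add_cancel_of_le (Order.one_le_iff_pos.mpr h)]

theorem reachWinsPlay_of_tail (p : G.Play) (h : 0 < p.len) (hwin : G.ReachWinsPlay (p.tail h)) :
    G.ReachWinsPlay p := by
  obtain ⟨k, hk, hGoal⟩ := hwin
  exact ⟨k + 1, add_le_of_le_tsub_right_of_le (Order.one_le_iff_pos.mpr h) hk, hGoal⟩

theorem consistentR_tail (p : G.Play) (h : 0 < p.len) {σ : List S → S} {τ : S → List S → S}
    (hp : G.ConsistentR (switchAfterFirst σ τ) p) :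
    G.ConsistentR (τ (p.seq 1)) (p.tail h) := by
  intro i hi hs
  have hnext := hp (i + 1) (lt_tsub_iff_right.mp hi) hs
  rw [listPrefix_succ_eq_cons, listPrefix_succ_eq_cons] at hnext
  rw [listPrefix_succ_eq_cons]
  exact hnext

end Play

end Plays

section WinningRegion

theorem exists_strategies_winning_on_reachWinningRegion (h : G.reachWinningRegion.Nonempty) :
    ∃ τ : S → List S → S, (∀ t, G.IsReachStrategy (τ t)) ∧
      ∀ t ∈ G.reachWinningRegion, G.WinningReachStrategyFrom (τ t) t := by
  obtain ⟨_, σ, hσ⟩ := h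
  have exists_strategy (t : S) : ∃ τ, G.IsReachStrategy τ ∧
      (t ∈ G.reachWinningRegion → G.WinningReachStrategyFrom τ t) := by
    by_cases ht : t ∈ G.reachWinningRegion
    · obtain ⟨τ, hτ⟩ := ht
      exact ⟨τ, hτ.1, fun _ => hτ⟩
    · exact ⟨σ, hσ.1, fun h => absurd h ht⟩
  choose τ hτ hwin using exists_strategy
  exact ⟨τ, hτ, hwin⟩

theorem enforceablePre_reachWinningRegion_subset (G : Game S) :
    G.enforceablePre G.reachWinningRegion ⊆ G.reachWinningRegion := by
  rintro s ⟨t, hE, ht, hSafe⟩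
  have : Nonempty S := ⟨s⟩
  obtain ⟨σ, hσ, hσ_mem⟩ := G.exists_isReachStrategy_preferring G.reachWinningRegion
  obtain ⟨τ, hτ, hwin⟩ := exists_strategies_winning_on_reachWinningRegion ⟨t, ht⟩
  refine ⟨switchAfterFirst σ τ, hσ.switchAfterFirst hτ, ?_⟩
  rintro p rfl hp
  have hlen : 0 < p.len := p.len_pos_of_E hE
  have seq_one_mem : p.seq 1 ∈ G.reachWinningRegion := by
    by_cases hs : G.isReach (p.seq 0)
    · rw [hp 0 hlen hs]
      exact hσ_mem [] (p.seq 0) t (hE.reach hs) ht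
    · exact hSafe _ ((p.step 0 hlen).safe hs)
  exact p.reachWinsPlay_of_tail hlen
    ((hwin _ seq_one_mem).2 (p.tail hlen) rfl (p.consistentR_tail hlen hp))

theorem reachWinningRegion_subset {X : Set S} (hGoal : G.Goal ⊆ X)
    (hPre : G.enforceablePre X ⊆ X) : G.reachWinningRegion ⊆ X := by
  rintro s ⟨σ, hσ, hwin⟩
  by_contra hs
  have : Nonempty S := ⟨s⟩
  obtain ⟨τ, hτ, hτ_notMem⟩ := G.exists_isSafeStrategy_preferring Xᶜ
  obtain ⟨p, rfl, hpσ, hpτ⟩ := exists_play_consistent hσ hτ s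
  have stays_outside (i : ℕ) (hi : (i : ℕ∞) < p.len) (hX : p.seq i ∈ Xᶜ) :
      p.seq (i + 1) ∈ Xᶜ := by
    by_cases hReach : G.isReach (p.seq i)
    · exact fun hmem => hX (hPre (mem_enforceablePre_of_reach ((p.step i hi).reach hReach) hmem))
    · have hstep : G.Safe (p.seq i) (p.seq (i + 1)) := (p.step i hi).safe hReach
      obtain ⟨t, ht, htX⟩ : ∃ t, G.Safe (p.seq i) t ∧ t ∈ Xᶜ := by
        by_contra! hall
        exact hX (hPre (mem_enforceablePre_of_safe hstep fun u hu => not_not.mp (hall u hu)))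
      rw [hpτ i hi hReach, listPrefix_succ]
      exact hτ_notMem _ _ t ht htX
  obtain ⟨k, hk, hkGoal⟩ := hwin p rfl hpσ
  exact p.seq_mem_of_step hs stays_outside k hk (hGoal hkGoal)

end WinningRegion

section PreGame

variable {F : S → S → Prop} {X : Set S}

theorem goal_preGame_subset_enforceablePre (hF : Post F ⊆ X) :
    (G.preGame F).Goal ⊆ G.enforceablePre X := by
  rintro s ⟨t, hE, ht, hSafe⟩
  exact ⟨t, hE, hF ⟨s, ht⟩, fun u hu => hF ⟨s, hSafe u hu⟩⟩

theorem enforceablePre_preGame_subset (hF : Post F ⊆ X) :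
    (G.preGame F).enforceablePre X ⊆ G.enforceablePre X := by
  rintro s ⟨t, hE, ht, hSafe⟩
  refine ⟨t, hE.imp And.left And.left, ht, fun u hu => ?_⟩
  by_cases hFu : F s u
  · exact hF ⟨s, hFu⟩
  · exact hSafe u ⟨hu, hFu⟩

end PreGame

end Game

/-- if `F` is a sufficient subgoal and REACH wins from `s` in
the pre-game, then REACH wins from `s` in `G`. -/
theorem reach_wins_of_wins_preGame {S : Type u} (G : Game S)
    (F : S → S → Prop) (hF : ∀ s' ∈ Game.Post F, G.ReachWinsFrom s')
    (s : S) (h : (G.preGame F).ReachWinsFrom s) :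
    G.ReachWinsFrom s := by
  have hPost : Game.Post F ⊆ G.reachWinningRegion := hF
  have hPre := G.enforceablePre_reachWinningRegion_subset
  have hsub : (G.preGame F).reachWinningRegion ⊆ G.reachWinningRegion :=
    Game.reachWinningRegion_subset
      ((Game.goal_preGame_subset_enforceablePre hPost).trans hPre)
      ((Game.enforceablePre_preGame_subset hPost).trans hPre)
  exact hsub h
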